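/- Let k ≥ 3 and n ≥ 3 be odd integers and set d = (1 − 2k^n)^n. Then 4d + 1 = 1 − 4a^n with a = 2k^n − 1 ≥ 2, and n divides the class number of the imaginary quadratic field ℚ(√(4d+1)); in fact the ideal class group of ℚ(√(4d+1)) contains an element of order n. -/

import Mathlib

open IntermediateField NumberField

/-- The quadratic field `ℚ(√D)`, realized inside `ℂ` by adjoining the principal
square root of `D`. -/
noncomputable def quadField (D : ℤ) : IntermediateField ℚ ℂ :=
  ℚ⟮(D : ℂ) ^ ((1 : ℂ) / 2)⟯

/-- The class number of the quadratic field `ℚ(√D)`. -/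
noncomputable def quadClassNumber (D : ℤ) : ℕ :=
  Nat.card (ClassGroup (𝓞 (quadField D)))

/-!
Put `D = 1 - 4 * a ^ n` and `α = (1 + √D) / 2`. Then `α * (1 - α) = a ^ n` with coprime factors, so
`(α) = I ^ n`. If the class of `I` had order less than `n`, then `α` would be a unit times a `p`-th
power for some prime `p ∣ n`. The units of `ℚ(√D)` have order dividing `4` or `6`, and elements of
order `3` or `6` occur only if `D = -3 * f ^ 2`; for `p = 3` this would turn `4 * a ^ n = 1 - D`
into a solution of Fermat's equation for cubes. So the unit is itself a `p`-th power and
`α = δ ^ p`.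

With `x = δ` and `y` its conjugate, `x ^ p + y ^ p = α + (1 - α) = 1`. The trace `x + y` divides
`x ^ p + y ^ p = 1` and is congruent to `1` modulo `p`, so it is `1`. Then
`(x + y) ^ p = x ^ p + y ^ p + p * x * y * ((x + y) ^ (p - 2) + x * y * r)` forces
`1 + x * y * r = 0`, so the norm `x * y` is a unit, although its `p`-th power is `a ^ n`.
-/

open scoped ComplexConjugate

theorem exists_add_pow_prime_eq_add_mul_add_pow {R : Type*} [CommRing R] {p : ℕ} (hp : p.Prime)
    (x y : R) :
    ∃ r, (x + y) ^ p = x ^ p + y ^ p + p * (x * y) * ((x + y) ^ (p - 2) + x * y * r) := by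
  obtain ⟨q, rfl⟩ := Nat.exists_eq_add_of_le' hp.two_le
  have hdvd : x * y ∣ (∑ k ∈ Finset.Ioo 0 (q + 2),
      x ^ (k - 1) * y ^ (q + 2 - k - 1) * ((q + 2).choose k / (q + 2) : ℕ)) - (x + y) ^ q := by
    rw [show Finset.Ioo 0 (q + 2) = Finset.Ico 1 (q + 2) from rfl, Finset.sum_Ico_eq_sum_range,
      add_pow, show q + 2 - 1 = q + 1 from rfl, ← Finset.sum_sub_distrib]
    refine Finset.dvd_sum fun k hk ↦ ?_
    have hkq : k ≤ q := Finset.mem_range_succ_iff.mp hk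
    rw [show 1 + k - 1 = k by omega, show q + 2 - (1 + k) - 1 = q - k by omega, ← mul_sub]
    rcases Nat.eq_zero_or_pos k with rfl | hk_pos
    · simp
    rcases hkq.eq_or_lt with rfl | hk_lt
    · rw [show 1 + k = k + 2 - 1 by omega, Nat.choose_symm (by omega)]
      simp
    · exact (mul_dvd_mul (dvd_pow_self x hk_pos.ne') (dvd_pow_self y (by omega))).mul_right _
  obtain ⟨r, hr⟩ := hdvd
  refine ⟨r, ?_⟩
  rw [add_pow_prime_eq hp, Nat.add_sub_cancel, ← hr]
  ring

theorem isUnit_of_pow_add_pow_eq_one {R : Type*} [CommRing R] [IsDomain R] [CharZero R]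
    [Algebra.IsIntegral ℤ R] {p : ℕ} (hp : p.Prime) (hodd : Odd p) {x y : R} {s b : ℤ}
    (hs : x + y = s) (hb : x * y = b) (hb0 : b ≠ 0) (h : x ^ p + y ^ p = 1) : IsUnit b := by
  have isUnit_of_cast {m : ℤ} (hm : (m : R) ∣ 1) : IsUnit m :=
    isUnit_of_map_unit (algebraMap ℤ R) m (by simpa using isUnit_of_dvd_one hm)
  obtain ⟨r, hr⟩ := exists_add_pow_prime_eq_add_mul_add_pow hp x y
  rw [h, hs, hb] at hr
  have s_eq_one : s = 1 := by
    have s_isUnit : IsUnit s := isUnit_of_cast (hs ▸ h ▸ hodd.add_dvd_pow_add_pow x y)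
    refine (Int.isUnit_iff.mp s_isUnit).resolve_right fun s_eq ↦ ?_
    have p_dvd_two : (p : R) ∣ 2 := by
      rw [s_eq, Int.cast_neg, Int.cast_one, hodd.neg_one_pow] at hr
      exact ⟨-(b * ((-1) ^ (p - 2) + b * r)), by linear_combination -hr⟩
    have p_dvd_one : ((p : ℤ) : R) ∣ 1 := by
      obtain ⟨c, hc⟩ := hodd
      rw [show (1 : R) = p - 2 * c by rw [hc]; push_cast; ring, Int.cast_natCast]
      exact (dvd_refl _).sub (p_dvd_two.mul_right _)
    exact (Nat.prime_iff_prime_int.mp hp).not_isUnit (isUnit_of_cast p_dvd_one)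
  subst s_eq_one
  have hp0 : (p : R) ≠ 0 := Nat.cast_ne_zero.mpr hp.ne_zero
  have hb0' : (b : R) ≠ 0 := Int.cast_ne_zero.mpr hb0
  have one_add : (1 : R) + b * r = 0 := by
    simpa [hp0, hb0'] using hr
  exact isUnit_of_cast ⟨-r, by linear_combination one_add⟩

theorem pow_four_eq_one_or_pow_six_eq_one {R : Type*} [CommRing R] [IsReduced R] {z : R} {t : ℤ}
    (ht : t ^ 2 ≤ 4) (hz : z ^ 2 = t * z - 1) : z ^ 4 = 1 ∨ t ^ 2 = 1 ∧ z ^ 6 = 1 := by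
  obtain ⟨ht_ge, ht_le⟩ : -2 ≤ t ∧ t ≤ 2 :=
    abs_le.mp (abs_le_of_sq_le_sq (by linarith) zero_le_two)
  have trace_sq_eq_four {ε : ℤ} (hε : ε ^ 2 = 1) (ht : t = 2 * ε) : z ^ 4 = 1 := by
    have hε' : (ε : R) ^ 2 = 1 := by exact_mod_cast congrArg (Int.cast (R := R)) hε
    have hsq : (z - ε) ^ 2 = 0 := by
      rw [ht] at hz
      push_cast at hz
      linear_combination hz + hε'
    rw [sub_eq_zero.mp (pow_eq_zero_iff two_ne_zero |>.mp hsq)]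
    linear_combination ((ε : R) ^ 2 + 1) * hε'
  have trace_sq_eq_one (ht : t ^ 2 = 1) : z ^ 6 = 1 := by
    have ht' : (t : R) ^ 2 = 1 := by exact_mod_cast congrArg (Int.cast (R := R)) ht
    have cube_eq : z ^ 3 = -t := by linear_combination (z + t) * hz + z * ht'
    rw [show z ^ 6 = (z ^ 3) ^ 2 by ring, cube_eq, neg_sq, ht']
  interval_cases t
  · exact .inl (trace_sq_eq_four (ε := -1) rfl rfl)
  · exact .inr ⟨rfl, trace_sq_eq_one rfl⟩
  · left
    linear_combination (z ^ 2 - 1) * hz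
  · exact .inr ⟨rfl, trace_sq_eq_one rfl⟩
  · exact .inl (trace_sq_eq_four (ε := 1) rfl rfl)

theorem eq_one_of_one_sub_four_mul_cube_eq {A f : ℤ} (h : 1 - 4 * A ^ 3 = -3 * f ^ 2) : A = 1 := by
  have hodd : Odd f := by
    have : Odd (3 * f ^ 2) := ⟨2 * A ^ 3 - 1, by linarith⟩
    exact Int.odd_pow' two_ne_zero |>.mp (Int.odd_mul.mp this).2
  obtain ⟨e, rfl⟩ := hodd
  have sum_cubes : (e + 1) ^ 3 + (-e) ^ 3 = A ^ 3 := by linarith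
  have hA : A ≠ 0 := by
    rintro rfl
    nlinarith
  have he : e + 1 = 0 ∨ -e = 0 := by
    by_contra! he
    exact fermatLastTheoremFor_iff_int.mp fermatLastTheoremThree (e + 1) (-e) A he.1 he.2 hA
      sum_cubes
  have cube_eq_one : A ^ 3 = 1 ^ 3 := by
    rcases he with he | he
    · rw [← sum_cubes, eq_neg_of_add_eq_zero_left he]
      norm_num
    · rw [← sum_cubes, neg_eq_zero.mp he]
      norm_num
  exact (Odd.strictMono_pow (by decide : Odd 3)).injective cube_eq_one

theorem exists_orderOf_classGroup_eq {R : Type*} [CommRing R] [IsDedekindDomain R] {α β c : R}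
    {n : ℕ} (hn : 0 < n) (hα : α ≠ 0) (hcop : IsCoprime α β) (hmul : α * β = c ^ n)
    (hpow : ∀ p, p.Prime → p ∣ n → ∀ γ : R, ¬ Associated (γ ^ p) α) :
    ∃ g : ClassGroup R, orderOf g = n := by
  obtain ⟨I, hI⟩ : ∃ I : Ideal R, Ideal.span {α} = I ^ n :=
    exists_eq_pow_of_mul_eq_pow_of_coprime
      ((Ideal.isCoprime_span_singleton_iff α β).mpr hcop)
      (by rw [Ideal.span_singleton_mul_span_singleton, hmul, Ideal.span_singleton_pow])
  have hI0 : I ≠ 0 := by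
    rintro rfl
    rw [zero_pow hn.ne', Ideal.zero_eq_bot, Ideal.span_singleton_eq_bot] at hI
    exact hα hI
  let J : nonZeroDivisors (Ideal R) := ⟨I, mem_nonZeroDivisors_of_ne_zero hI0⟩
  refine ⟨ClassGroup.mk0 J, orderOf_eq_of_pow_and_pow_div_prime hn ?_ ?_⟩
  · rw [← map_pow, ClassGroup.mk0_eq_one_iff]
    exact ⟨α, hI.symm⟩
  · rintro p hp ⟨m, rfl⟩ hm
    rw [Nat.mul_div_cancel_left m hp.pos, ← map_pow, ClassGroup.mk0_eq_one_iff] at hm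
    obtain ⟨γ, hγ : I ^ m = Ideal.span {γ}⟩ := hm
    refine hpow p hp (dvd_mul_right p m) γ ?_
    rw [← Ideal.span_singleton_eq_span_singleton, ← Ideal.span_singleton_pow, ← hγ, hI, ← pow_mul,
      mul_comm]

theorem exists_intCast_eq_of_isIntegral_ratCast {K : Type*} [Field K] [CharZero K] {q : ℚ}
    (hq : IsIntegral ℤ (q : K)) : ∃ m : ℤ, (m : K) = q := by
  have hq' : IsIntegral ℤ q :=
    (isIntegral_algebraMap_iff (algebraMap ℚ K).injective).mp (by simpa using hq)
  obtain ⟨m, rfl⟩ := IsIntegrallyClosed.isIntegral_iff.mp hq'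
  exact ⟨m, by simp⟩

theorem exists_eq_add_mul_of_mem_adjoin_simple {F E : Type*} [Field F] [Field E] [Algebra F E]
    {a : E} {d : F} (ha : a ^ 2 = algebraMap F E d) {x : E} (hx : x ∈ F⟮a⟯) :
    ∃ r s : F, x = algebraMap F E r + algebraMap F E s * a := by
  have ha_int : IsIntegral F a := .of_pow two_pos (ha ▸ isIntegral_algebraMap)
  rw [← mem_toSubalgebra, adjoin_simple_toSubalgebra_of_isAlgebraic ha_int.isAlgebraic] at hx
  induction hx using Algebra.adjoin_induction with
  | mem x hx => exact ⟨0, 1, by simpa using hx⟩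
  | algebraMap r => exact ⟨r, 0, by simp⟩
  | add x y _ _ hx hy =>
    obtain ⟨r, s, rfl⟩ := hx
    obtain ⟨r', s', rfl⟩ := hy
    exact ⟨r + r', s + s', by simp only [map_add]; ring⟩
  | mul x y _ _ hx hy =>
    obtain ⟨r, s, rfl⟩ := hx
    obtain ⟨r', s', rfl⟩ := hy
    refine ⟨r * r' + s * s' * d, r * s' + s * r', ?_⟩
    simp only [map_add, map_mul, ← ha]
    ring

theorem cpow_half_sq (z : ℂ) : (z ^ ((1 : ℂ) / 2)) ^ 2 = z := by simp

namespace quadField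

variable {D : ℤ}

theorem isIntegral_cpow_half (D : ℤ) : IsIntegral ℤ ((D : ℂ) ^ ((1 : ℂ) / 2)) :=
  .of_pow two_pos (by rw [cpow_half_sq]; exact isIntegral_algebraMap)

instance (D : ℤ) : NumberField (quadField D) where
  to_finiteDimensional := adjoin.finiteDimensional (isIntegral_cpow_half D).tower_top

/-- The principal square root of `D`, as an element of the ring of integers of `ℚ(√D)`. It need not
generate that ring, as `D` may be congruent to `1` modulo `4` or have square factors. -/
noncomputable def sqrt (D : ℤ) : 𝓞 (quadField D) :=
  ⟨⟨(D : ℂ) ^ ((1 : ℂ) / 2), mem_adjoin_simple_self ℚ _⟩,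
    (isIntegral_algebraMap_iff (algebraMap (quadField D) ℂ).injective).mp (isIntegral_cpow_half D)⟩

theorem algebraMap_sqrt (D : ℤ) : algebraMap _ ℂ (sqrt D) = (D : ℂ) ^ ((1 : ℂ) / 2) :=
  rfl

theorem sqrt_sq (D : ℤ) : sqrt D ^ 2 = D := by
  apply FaithfulSMul.algebraMap_injective _ ℂ
  rw [map_pow, map_intCast, algebraMap_sqrt, cpow_half_sq]

theorem algebraMap_mem (x : 𝓞 (quadField D)) : algebraMap _ ℂ x ∈ quadField D :=
  (x : quadField D).2

theorem exists_algebraMap_eq {z : ℂ} (hz : z ∈ quadField D) (hint : IsIntegral ℤ z) :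
    ∃ x : 𝓞 (quadField D), algebraMap _ ℂ x = z :=
  ⟨⟨⟨z, hz⟩, (isIntegral_algebraMap_iff (algebraMap (quadField D) ℂ).injective).mp hint⟩, rfl⟩

theorem conj_mem {z : ℂ} (hz : z ∈ quadField D) : conj z ∈ quadField D := by
  have hδ : (D : ℂ) ^ ((1 : ℂ) / 2) ∈ quadField D := mem_adjoin_simple_self ℚ _
  have conj_sq : conj ((D : ℂ) ^ ((1 : ℂ) / 2)) ^ 2 = ((D : ℂ) ^ ((1 : ℂ) / 2)) ^ 2 := by
    rw [← map_pow, cpow_half_sq, map_intCast]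
  have conj_δ_mem : conj ((D : ℂ) ^ ((1 : ℂ) / 2)) ∈ quadField D := by
    rcases sq_eq_sq_iff_eq_or_eq_neg.mp conj_sq with h | h <;> rw [h]
    exacts [hδ, neg_mem hδ]
  have map_le : (quadField D).map (Complex.conjAe.restrictScalars ℚ).toAlgHom ≤ quadField D := by
    rw [quadField, adjoin_map, Set.image_singleton, adjoin_simple_le_iff]
    exact conj_δ_mem
  exact map_le ⟨z, hz, rfl⟩

/-- Complex conjugation on the ring of integers of `ℚ(√D)`; for `D < 0` it is the nontrivial
Galois automorphism. -/
noncomputable def conjHom (D : ℤ) : 𝓞 (quadField D) →+* 𝓞 (quadField D) :=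
  RingOfIntegers.mapRingHom <|
    ((starRingEnd ℂ).comp (quadField D).toSubfield.subtype).codRestrict (quadField D)
      fun x ↦ conj_mem x.2

theorem algebraMap_conjHom (x : 𝓞 (quadField D)) :
    algebraMap _ ℂ (conjHom D x) = conj (algebraMap _ ℂ x) :=
  rfl

theorem conjHom_conjHom (x : 𝓞 (quadField D)) : conjHom D (conjHom D x) = x :=
  FaithfulSMul.algebraMap_injective _ ℂ (by simp only [algebraMap_conjHom, Complex.conj_conj])

theorem im_sqrt_ne_zero (hD : D < 0) : (algebraMap _ ℂ (sqrt D)).im ≠ 0 := by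
  intro him
  have hsq : algebraMap _ ℂ (sqrt D) ^ 2 = D := by rw [← map_pow, sqrt_sq, map_intCast]
  have hre : (algebraMap _ ℂ (sqrt D)).re ^ 2 = D := by
    simpa [pow_two, him] using congrArg Complex.re hsq
  have : (D : ℝ) < 0 := by exact_mod_cast hD
  linarith [sq_nonneg (algebraMap _ ℂ (sqrt D)).re]

theorem conjHom_sqrt (hD : D < 0) : conjHom D (sqrt D) = -sqrt D := by
  have hsq : conjHom D (sqrt D) ^ 2 = sqrt D ^ 2 := by rw [← map_pow, sqrt_sq, map_intCast]
  refine (sq_eq_sq_iff_eq_or_eq_neg.mp hsq).resolve_left fun h ↦ im_sqrt_ne_zero hD ?_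
  rw [← Complex.conj_eq_iff_im, ← algebraMap_conjHom, h]

theorem exists_intCast_eq_of_conjHom_eq_self (hD : D < 0) {x : 𝓞 (quadField D)}
    (hx : conjHom D x = x) : ∃ m : ℤ, x = m := by
  obtain ⟨r, s, hrs⟩ := exists_eq_add_mul_of_mem_adjoin_simple (d := (D : ℚ))
    (by simp) (algebraMap_mem x)
  rw [← algebraMap_sqrt] at hrs
  have im_eq : (algebraMap _ ℂ x).im = 0 := by
    rw [← Complex.conj_eq_iff_im, ← algebraMap_conjHom, hx]
  have s_eq : s = 0 := by simpa [hrs, im_sqrt_ne_zero hD] using im_eq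
  have x_eq : algebraMap _ ℂ x = r := by simpa [s_eq] using hrs
  obtain ⟨m, hm⟩ := exists_intCast_eq_of_isIntegral_ratCast (K := ℂ) (q := r)
    (x_eq ▸ (RingOfIntegers.isIntegral x).algebraMap)
  exact ⟨m, FaithfulSMul.algebraMap_injective _ ℂ (by rw [x_eq, map_intCast, hm])⟩

theorem exists_trace_norm (hD : D < 0) (x : 𝓞 (quadField D)) :
    ∃ t N : ℤ, x + conjHom D x = t ∧ x * conjHom D x = N ∧ t ^ 2 ≤ 4 * N := by
  obtain ⟨t, ht⟩ := exists_intCast_eq_of_conjHom_eq_self hD (x := x + conjHom D x)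
    (by rw [map_add, conjHom_conjHom, add_comm])
  obtain ⟨N, hN⟩ := exists_intCast_eq_of_conjHom_eq_self hD (x := x * conjHom D x)
    (by rw [map_mul, conjHom_conjHom, mul_comm])
  refine ⟨t, N, ht, hN, ?_⟩
  have two_mul_re : 2 * (algebraMap _ ℂ x).re = t := by
    simpa [algebraMap_conjHom, two_mul] using congrArg (fun y ↦ (algebraMap _ ℂ y).re) ht
  have normSq_eq : Complex.normSq (algebraMap _ ℂ x) = N := by
    have := congrArg (algebraMap _ ℂ) hN
    rw [map_mul, algebraMap_conjHom, Complex.mul_conj, map_intCast] at this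
    exact_mod_cast this
  rw [Complex.normSq_apply] at normSq_eq
  have : (t : ℝ) ^ 2 ≤ 4 * N := by
    rw [← two_mul_re, ← normSq_eq]
    linarith [mul_self_nonneg (algebraMap _ ℂ x).im]
  exact_mod_cast this

theorem mul_conjHom_unit (hD : D < 0) (u : (𝓞 (quadField D))ˣ) :
    (u : 𝓞 (quadField D)) * conjHom D u = 1 := by
  obtain ⟨t, N, -, hN, hle⟩ := exists_trace_norm hD (u : 𝓞 (quadField D))
  have N_isUnit : IsUnit N := by
    refine isUnit_of_map_unit (algebraMap ℤ (𝓞 (quadField D))) N ?_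
    rw [eq_intCast, ← hN]
    exact u.isUnit.mul (u.isUnit.map (conjHom D))
  have N_ne : N ≠ -1 := by nlinarith
  rw [hN, (Int.isUnit_iff.mp N_isUnit).resolve_right N_ne, Int.cast_one]

theorem exists_eq_neg_three_mul_sq (hD : D < 0) {x : 𝓞 (quadField D)} (hconj : conjHom D x = -x)
    (hx : x ^ 2 = -3) : ∃ f : ℤ, D = -3 * f ^ 2 := by
  obtain ⟨m, hm⟩ := exists_intCast_eq_of_conjHom_eq_self hD (x := x * sqrt D)
    (by rw [map_mul, hconj, conjHom_sqrt hD, neg_mul_neg])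
  have m_sq : m ^ 2 = -3 * D := by
    have : (m : 𝓞 (quadField D)) ^ 2 = -3 * D := by rw [← hm, mul_pow, hx, sqrt_sq]
    exact_mod_cast this
  obtain ⟨f, rfl⟩ : 3 ∣ m := Int.prime_three.dvd_of_dvd_pow (n := 2) ⟨-D, by linarith⟩
  exact ⟨f, by linarith⟩

theorem unit_pow_four_eq_one_or_pow_six_eq_one (hD : D < 0) (u : (𝓞 (quadField D))ˣ) :
    u ^ 4 = 1 ∨ u ^ 6 = 1 ∧ ∃ f : ℤ, D = -3 * f ^ 2 := by
  obtain ⟨t, N, ht, hN, hle⟩ := exists_trace_norm hD (u : 𝓞 (quadField D))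
  have hN1 : N = 1 := by
    rw [mul_conjHom_unit hD] at hN
    exact_mod_cast hN.symm
  have sq_eq : (u : 𝓞 (quadField D)) ^ 2 = t * u - 1 := by
    linear_combination u.val * ht - mul_conjHom_unit hD u
  rcases pow_four_eq_one_or_pow_six_eq_one (by linarith) sq_eq with h4 | ⟨ht1, h6⟩
  · exact .inl (Units.ext (by simpa using h4))
  · refine .inr ⟨Units.ext (by simpa using h6), ?_⟩
    have ht1' : (t : 𝓞 (quadField D)) ^ 2 = 1 := by exact_mod_cast ht1
    refine exists_eq_neg_three_mul_sq hD (x := 2 * u - t) ?_ ?_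
    · rw [map_sub, map_mul, map_ofNat, map_intCast]
      linear_combination 2 * ht
    · linear_combination 4 * sq_eq + ht1'

theorem exists_unit_pow_eq (hD : D < 0) {p : ℕ} (hp : p.Prime) (hodd : Odd p)
    (h3 : p = 3 → ∀ f : ℤ, D ≠ -3 * f ^ 2) (u : (𝓞 (quadField D))ˣ) : ∃ v, v ^ p = u := by
  suffices hcop : p.Coprime (orderOf u) by
    obtain ⟨m, hm⟩ := exists_pow_eq_self_of_coprime hcop
    exact ⟨u ^ m, by rw [← pow_mul, mul_comm, pow_mul, hm]⟩
  have hp2 : p.Coprime 2 := Nat.coprime_two_right.mpr hodd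
  rcases unit_pow_four_eq_one_or_pow_six_eq_one hD u with h4 | ⟨h6, f, hf⟩
  · exact (hp2.pow_right 2).coprime_dvd_right (orderOf_dvd_of_pow_eq_one h4)
  · have hp3 : p.Coprime 3 :=
      (Nat.coprime_primes hp Nat.prime_three).mpr fun h ↦ h3 h f hf
    exact (hp2.mul_right hp3).coprime_dvd_right (orderOf_dvd_of_pow_eq_one h6)

theorem exists_mul_one_sub_eq (hD : D < 0) {c : ℤ} (hDc : D = 1 - 4 * c) :
    ∃ α : 𝓞 (quadField D), α * (1 - α) = c ∧ conjHom D α = 1 - α := by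
  set δ := algebraMap _ ℂ (sqrt D) with hδ
  have δ_sq : δ ^ 2 = 1 - 4 * (c : ℂ) := by
    rw [hδ, ← map_pow, sqrt_sq, map_intCast, hDc]
    push_cast
    rfl
  have half_mem : (1 + δ) / 2 ∈ quadField D :=
    div_mem (add_mem (one_mem _) (algebraMap_mem _)) (ofNat_mem _ 2)
  have half_isIntegral : IsIntegral ℤ ((1 + δ) / 2) := by
    refine ⟨Polynomial.X ^ 2 - Polynomial.X + Polynomial.C c, by monicity!, ?_⟩
    simp only [Polynomial.eval₂_add, Polynomial.eval₂_sub, Polynomial.eval₂_pow,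
      Polynomial.eval₂_X, Polynomial.eval₂_C, algebraMap_int_eq, Int.coe_castRingHom]
    linear_combination δ_sq / 4
  obtain ⟨α, hα⟩ := exists_algebraMap_eq half_mem half_isIntegral
  refine ⟨α, FaithfulSMul.algebraMap_injective _ ℂ ?_, FaithfulSMul.algebraMap_injective _ ℂ ?_⟩
  · simp only [map_mul, map_sub, map_one, map_intCast, hα]
    linear_combination -δ_sq / 4
  · have conj_δ : conj δ = -δ := by rw [hδ, ← algebraMap_conjHom, conjHom_sqrt hD, map_neg]
    simp only [algebraMap_conjHom, hα, map_div₀, map_add, map_sub, map_one, conj_δ,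
      Complex.conj_ofNat]
    ring

theorem not_associated_pow {p : ℕ} (hp : p.Prime) (hodd : Odd p) {A : ℤ} (hA : 2 ≤ A)
    (hDA : D = 1 - 4 * A ^ p) {α : 𝓞 (quadField D)} (hα : α * (1 - α) = (A ^ p : ℤ))
    (hconj : conjHom D α = 1 - α) (γ : 𝓞 (quadField D)) : ¬Associated (γ ^ p) α := by
  have hD : D < 0 := by linarith [pow_pos (by linarith : 0 < A) p]
  rintro ⟨u, hu⟩
  obtain ⟨v, rfl⟩ : ∃ v, v ^ p = u := by
    refine exists_unit_pow_eq hD hp hodd ?_ u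
    rintro rfl f hf
    have := eq_one_of_one_sub_four_mul_cube_eq (hDA.symm.trans hf)
    omega
  rw [Units.val_pow_eq_pow_val, ← mul_pow] at hu
  obtain ⟨t, N, ht, hN, -⟩ := exists_trace_norm hD (γ * v)
  have conj_pow : conjHom D (γ * v) ^ p = 1 - α := by rw [← map_pow, hu, hconj]
  have norm_pow : N ^ p = A ^ p := by
    have : (N : 𝓞 (quadField D)) ^ p = (A ^ p : ℤ) := by rw [← hN, mul_pow, hu, conj_pow, hα]
    exact_mod_cast this
  have norm_eq : N = A := hodd.strictMono_pow.injective norm_pow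
  have A_isUnit : IsUnit A := norm_eq ▸ isUnit_of_pow_add_pow_eq_one hp hodd ht hN (by omega)
    (by rw [hu, conj_pow, add_sub_cancel])
  rcases Int.isUnit_iff.mp A_isUnit with h | h <;> omega

end quadField

open quadField in
theorem stmt_17_general {n : ℕ} (hn : Odd n) {a : ℤ} (ha : 2 ≤ a) :
    n ∣ quadClassNumber (1 - 4 * a ^ n) ∧
      ∃ g : ClassGroup (𝓞 (quadField (1 - 4 * a ^ n))), orderOf g = n := by
  suffices h : ∃ g : ClassGroup (𝓞 (quadField (1 - 4 * a ^ n))), orderOf g = n by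
    obtain ⟨g, hg⟩ := h
    exact ⟨hg.symm.dvd.trans (orderOf_dvd_natCard g), g, hg⟩
  have hD : 1 - 4 * a ^ n < 0 := by linarith [pow_pos (by linarith : 0 < a) n]
  obtain ⟨α, hα, hconj⟩ := exists_mul_one_sub_eq hD rfl
  have hα0 : α ≠ 0 := by
    rintro rfl
    simp at hconj
  refine exists_orderOf_classGroup_eq (β := 1 - α) (c := a) hn.pos hα0 ⟨1, 1, by ring⟩
    (by rw [hα, Int.cast_pow]) fun p hp ⟨m, hm⟩ ↦ ?_
  obtain ⟨hp_odd, hm_odd⟩ := Nat.odd_mul.mp (hm ▸ hn)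
  have hpow : a ^ n = (a ^ m) ^ p := by rw [← pow_mul, hm, mul_comm]
  exact not_associated_pow hp hp_odd (ha.trans (le_self_pow₀ (by linarith) hm_odd.pos.ne'))
    (by rw [hpow]) (by rw [hα, hpow]) hconj

theorem stmt_17 (k n : ℕ) (hk : 3 ≤ k) (hko : Odd k) (hn : 3 ≤ n) (hno : Odd n)
    (d a : ℤ) (hd : d = (1 - 2 * (k : ℤ) ^ n) ^ n) (ha : a = 2 * (k : ℤ) ^ n - 1) :
    4 * d + 1 = 1 - 4 * a ^ n ∧ 2 ≤ a ∧ n ∣ quadClassNumber (4 * d + 1) ∧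
      ∃ g : ClassGroup (𝓞 (quadField (4 * d + 1))), orderOf g = n := by
  have hD : 4 * d + 1 = 1 - 4 * a ^ n := by
    rw [hd, ← neg_sub, ← ha, hno.neg_pow]
    ring
  have ha2 : 2 ≤ a := by
    have : (k : ℤ) ≤ (k : ℤ) ^ n := le_self_pow₀ (by omega) (by omega)
    omega
  rw [hD]
  exact ⟨rfl, ha2, stmt_17_general hno ha2⟩
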